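/- arXiv:cond-mat/0607513 — 3 statements merged into one kernel-verified Lean document; each statement's English description precedes it below -/
import Mathlib

section
/- Fix an integer w ≥ 1, weights a, b, c > 0, and 0 ≤ m ≤ w. Define the relation R on m-element subsets of ZMod w by: S R T iff Z_{S,T}(w,1) > 0, i.e. there exists an ice configuration of a single cyclic row whose top row of vertical bonds is the indicator of S and whose bottom row is the indicator of T. Then for every m-element subset S ⊆ ZMod w there is a chain S = S₀ R S₁ R ⋯ R S_n with S_n = {0, 1, …, m−1} and n ≤ m. -/
/-!
A single line may be moved from any occupied site `x` to any vacant site `p` in one transfer step,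
whatever the other lines do: put a horizontal line on the cyclic interval from `p` up to, but
excluding, `x`.  Its indicator jumps by `+1` at `p`, by `-1` at `x` and nowhere else, which is
exactly the ice rule for the vertical rows `S` and `insert p (S.erase x)` (`Zfix_move_pos`).
All weights being positive, the existence of one configuration makes the partition function
positive (`Zfix_one_pos`).

Each such move can take a line of `S` outside the packed set `P` to a vacant site of `P`, so
`#(S \ P) ≤ m` moves turn `S` into `P` (`exists_chain`).
-/

open Filter Finset

/-- Weight of a vertex of the six-vertex model with incident line indicators
`t` (top vertical bond), `bo` (bottom vertical bond), `r` (right horizontal bond),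
`l` (left horizontal bond): weight `a` if no or all four bonds carry lines, `b` if
exactly the two vertical or exactly the two horizontal bonds carry lines, and `c` if
exactly one vertical and one horizontal bond carry lines. -/
def vweight (a b c : ℝ) (t bo r l : Bool) : ℝ :=
  if t = bo ∧ r = l then (if t = r then a else b) else c

/-- The ice rule on the `w × h` cylinder: at every vertex `(i, j)` the number of lines on the
top vertical bond and the right horizontal bond equals the number of lines on the bottom
vertical bond and the left horizontal bond. -/
def IceCyl (w h : ℕ) (σv : ZMod w × Fin (h + 1) → Bool) (σh : ZMod w × Fin h → Bool) : Prop :=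
  ∀ (i : ZMod w) (j : Fin h),
    ((if σv (i, j.castSucc) then 1 else 0) + (if σh (i, j) then 1 else 0) : ℕ) =
      (if σv (i, j.succ) then 1 else 0) + (if σh (i - 1, j) then 1 else 0)

open Classical in
/-- Fixed-boundary partition function `Z_{S,T}(w,h)` of the six-vertex model on the `w × h`
cylinder: the sum over all ice configurations whose row `0` of vertical bonds is the indicator
of `S` and whose row `h` is the indicator of `T`, of the product of the weights of all
`w·h` vertices.  (Junk value `0` when `w = 0`.) -/
noncomputable def Zfix (w h : ℕ) (a b c : ℝ) (S T : Finset (ZMod w)) : ℝ :=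
  if hw : w = 0 then 0 else
    haveI : NeZero w := ⟨hw⟩
    ∑ σ : (ZMod w × Fin (h + 1) → Bool) × (ZMod w × Fin h → Bool),
      if IceCyl w h σ.1 σ.2 ∧ (∀ i : ZMod w, (σ.1 (i, 0) = true ↔ i ∈ S)) ∧
          (∀ i : ZMod w, (σ.1 (i, Fin.last h) = true ↔ i ∈ T)) then
        ∏ i : ZMod w, ∏ j : Fin h,
          vweight a b c (σ.1 (i, j.castSucc)) (σ.1 (i, j.succ)) (σ.2 (i, j)) (σ.2 (i - 1, j))
      else 0

lemma vweight_pos {a b c : ℝ} (ha : 0 < a) (hb : 0 < b) (hc : 0 < c) (t bo r l : Bool) :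
    0 < vweight a b c t bo r l := by
  unfold vweight
  split_ifs <;> assumption

/-- A horizontal row `h` satisfying the ice rule between the vertical rows `S` and `T` witnesses
that the one-row partition function is positive. -/
lemma Zfix_one_pos (w : ℕ) [NeZero w] {a b c : ℝ} (ha : 0 < a) (hb : 0 < b) (hc : 0 < c)
    (S T : Finset (ZMod w)) (h : ZMod w → Bool)
    (hice : ∀ i, ((if i ∈ S then 1 else 0) + (if h i then 1 else 0) : ℕ) =
      (if i ∈ T then 1 else 0) + (if h (i - 1) then 1 else 0)) :
    0 < Zfix w 1 a b c S T := by
  classical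
  unfold Zfix
  rw [dif_neg (NeZero.ne w)]
  have hprod : ∀ σ : (ZMod w × Fin (1 + 1) → Bool) × (ZMod w × Fin 1 → Bool),
      0 < ∏ i : ZMod w, ∏ j : Fin 1,
        vweight a b c (σ.1 (i, j.castSucc)) (σ.1 (i, j.succ)) (σ.2 (i, j)) (σ.2 (i - 1, j)) :=
    fun σ => Finset.prod_pos fun i _ => Finset.prod_pos fun j _ => vweight_pos ha hb hc _ _ _ _
  refine Finset.sum_pos' (fun σ _ => ?_)
    ⟨(fun q => if q.2 = 0 then decide (q.1 ∈ S) else decide (q.1 ∈ T), fun q => h q.1),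
      Finset.mem_univ _, ?_⟩
  · split_ifs
    · exact (hprod σ).le
    · exact le_rfl
  · rw [if_pos]
    · exact hprod _
    · refine ⟨fun i j => ?_, fun i => ?_, fun i => ?_⟩
      · have hj : j = 0 := Subsingleton.elim _ _
        subst hj
        simpa using hice i
      · simp
      · simp [Fin.last]

lemma val_sub_one_of_ne_zero (w : ℕ) [NeZero w] (j : ZMod w) (hj : j ≠ 0) :
    (j - 1).val + 1 = j.val := by
  have hpos : 0 < j.val := Nat.pos_of_ne_zero (by simpa using hj)
  have hlt := ZMod.val_lt j
  have : Fact (1 < w) := ⟨by omega⟩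
  have h1 : (1 : ZMod w).val = 1 := ZMod.val_one w
  rw [ZMod.val_sub (by omega), h1]
  omega

lemma val_zero_sub_one (w : ℕ) [NeZero w] : ((0 : ZMod w) - 1).val + 1 = w := by
  obtain ⟨k, rfl⟩ := Nat.exists_eq_succ_of_ne_zero (NeZero.ne w)
  rw [zero_sub, ZMod.val_neg_one]

/-- Moving one line from an occupied site `x` to a vacant site `p` is a transfer step of positive
weight, with no condition on the lines in between. -/
lemma Zfix_move_pos (w : ℕ) [NeZero w] {a b c : ℝ} (ha : 0 < a) (hb : 0 < b) (hc : 0 < c)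
    (S : Finset (ZMod w)) (x p : ZMod w) (hx : x ∈ S) (hp : p ∉ S) :
    0 < Zfix w 1 a b c S (insert p (S.erase x)) := by
  have hne : x ≠ p := fun h => hp (h ▸ hx)
  -- Horizontal lines occupy the cyclic interval `[p, x)`, measured by the distance from `p`.
  refine Zfix_one_pos w ha hb hc _ _ (fun i => decide ((i - p).val < (x - p).val)) fun i => ?_
  have hd0 : 0 < (x - p).val := Nat.pos_of_ne_zero (by simpa [sub_eq_zero] using hne)
  have hdlt := ZMod.val_lt (x - p)
  have hcomm : i - 1 - p = (i - p) - 1 := by ring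
  simp only [decide_eq_true_eq, Finset.mem_insert, Finset.mem_erase, hcomm]
  by_cases hip : i = p
  · subst hip
    have h0 := val_zero_sub_one w
    have hn : ¬ ((0 : ZMod w) - 1).val < (x - i).val := by omega
    rw [sub_self]
    simp only [if_neg hp, if_neg hn, ZMod.val_zero, if_pos hd0, true_or, if_true]
  · have h1 := val_sub_one_of_ne_zero w (i - p) (sub_ne_zero.mpr hip)
    by_cases hix : i = x
    · subst hix
      have hlt : (i - p - 1).val < (i - p).val := by omega
      simp [hx, hlt, hip]
    · have hv : (i - p).val ≠ (x - p).val := fun h =>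
        hix (sub_left_injective (ZMod.val_injective w h))
      have hiff : (i - p - 1).val < (x - p).val ↔ (i - p).val < (x - p).val := by omega
      simp [hip, hix, hiff]

/-- `d = #(S \ P)` single-line moves turn `S` into any `P` of the same cardinality. -/
lemma exists_chain (w : ℕ) [NeZero w] {a b c : ℝ} (ha : 0 < a) (hb : 0 < b) (hc : 0 < c)
    (m : ℕ) (P : Finset (ZMod w)) (hP : P.card = m) (d : ℕ) :
    ∀ S : Finset (ZMod w), S.card = m → (S \ P).card = d →
      ∃ chain : ℕ → Finset (ZMod w), chain 0 = S ∧ chain d = P ∧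
        (∀ k ≤ d, (chain k).card = m) ∧
        (∀ k < d, 0 < Zfix w 1 a b c (chain k) (chain (k + 1))) := by
  induction d with
  | zero =>
    intro S hS hd
    have hsub : S ⊆ P := by simpa [Finset.sdiff_eq_empty_iff_subset] using hd
    have hSP : S = P := Finset.eq_of_subset_of_card_le hsub (by omega)
    exact ⟨fun _ => S, rfl, hSP, fun _ _ => hS, fun k hk => absurd hk (Nat.not_lt_zero k)⟩
  | succ d ih =>
    intro S hS hd
    obtain ⟨x, hx⟩ := Finset.card_pos.mp (by omega : 0 < (S \ P).card)
    have hcard : (P \ S).card = (S \ P).card := Finset.card_sdiff_comm (by omega)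
    obtain ⟨p, hp⟩ := Finset.card_pos.mp (by omega : 0 < (P \ S).card)
    obtain ⟨hxS, hxP⟩ := Finset.mem_sdiff.mp hx
    obtain ⟨hpP, hpS⟩ := Finset.mem_sdiff.mp hp
    have hT : (insert p (S.erase x)).card = m := by
      rw [Finset.card_insert_of_notMem (fun h => hpS (Finset.mem_of_mem_erase h)),
        Finset.card_erase_add_one hxS, hS]
    have hTd : (insert p (S.erase x) \ P).card = d := by
      rw [Finset.insert_sdiff_of_mem _ hpP, Finset.erase_sdiff_comm,
        Finset.card_erase_of_mem hx, hd, Nat.add_sub_cancel]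
    obtain ⟨chain, h0, hlast, hc1, hc2⟩ := ih _ hT hTd
    refine ⟨fun k => Nat.casesOn k S chain, rfl, hlast, fun k hk => ?_, fun k hk => ?_⟩
    · cases k with
      | zero => exact hS
      | succ k => exact hc1 k (by omega)
    · cases k with
      | zero =>
        change 0 < Zfix w 1 a b c S (chain 0)
        rw [h0]
        exact Zfix_move_pos w ha hb hc S x p hxS hpS
      | succ k => exact hc2 k (by omega)

lemma card_packed (w m : ℕ) (hm : m ≤ w) :
    ((Finset.range m).image (Nat.cast : ℕ → ZMod w)).card = m := by
  rw [Finset.card_image_of_injOn, Finset.card_range]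
  intro i hi j hj hij
  have hi' : i < m := by simpa using hi
  have hj' : j < m := by simpa using hj
  have h := congrArg ZMod.val hij
  rwa [ZMod.val_cast_of_lt (by omega), ZMod.val_cast_of_lt (by omega)] at h

/-- Lemma 1, first half: on the cyclic row of width `w`, any `m`-element line configuration `S`
can be shifted, by single transfer-matrix steps with positive weight, to the configuration
`{0, 1, …, m−1}` in at most `m` steps, staying among `m`-element configurations. -/
theorem chain_to_packed_config (w : ℕ) [NeZero w]
    (a b c : ℝ) (ha : 0 < a) (hb : 0 < b) (hc : 0 < c)
    (m : ℕ) (hm : m ≤ w) (S : Finset (ZMod w)) (hS : S.card = m) :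
    ∃ n ≤ m, ∃ chain : ℕ → Finset (ZMod w),
      chain 0 = S ∧
      chain n = (Finset.range m).image (Nat.cast : ℕ → ZMod w) ∧
      (∀ k ≤ n, (chain k).card = m) ∧
      (∀ k < n, 0 < Zfix w 1 a b c (chain k) (chain (k + 1))) := by
  obtain ⟨chain, h0, hn, h1, h2⟩ :=
    exists_chain w ha hb hc m _ (card_packed w m hm) _ S hS rfl
  exact ⟨_, (Finset.card_le_card Finset.sdiff_subset).trans hS.le, chain, h0, hn, h1, h2⟩
end

section
/- Fix integers w, h ≥ 1, weights a, b, c > 0, and a subset S ⊆ Fin w with card S = m. Consider ice configurations on the w × h rectangle whose boundary data is: no lines on the left and right boundary horizontal bonds (σ_h(0,j) = σ_h(w,j) = false for all j ∈ Fin h) and whose top and bottom rows of vertical bonds both equal the indicator of S. Then there is exactly one such ice configuration: σ_v(i,j) = true iff i ∈ S (every line runs straight down its column) and σ_h ≡ false (no horizontal bond carries a line). Consequently the fixed-boundary partition function equals a^{(w−m)·h} · b^{m·h}. -/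
/-!
The ice rule is a conservation law. Summing it down column `i`, the vertical indicators telescope
to (bottom) − (top), which vanishes because the two rows agree; so the number of lines crossing
the vertical cut to the right of column `i` equals the number crossing the cut to its left
(`sum_horizontal_succ`). The leftmost cut carries no lines, hence neither does any other
(`horizontal_eq_false`). Without horizontal lines the ice rule says that each vertical bond equals
the one above it, so the configuration is determined by its top row, and every vertex in a column
of `S` has weight `b` while every other vertex has weight `a`.
-/

open Filter Finset

/-- The ice rule on the `w × h` rectangle: at every vertex `(i, j)`, with `σv (i, j)` the
vertical bond above it, `σv (i, j+1)` the vertical bond below it, `σh (i, j)` the horizontal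
bond to its left and `σh (i+1, j)` the horizontal bond to its right, the number of lines on the
top and right bonds equals the number of lines on the bottom and left bonds. -/
def IceRect (w h : ℕ) (σv : Fin w × Fin (h + 1) → Bool) (σh : Fin (w + 1) × Fin h → Bool) :
    Prop :=
  ∀ (i : Fin w) (j : Fin h),
    ((if σv (i, j.castSucc) then 1 else 0) + (if σh (i.succ, j) then 1 else 0) : ℕ) =
      (if σv (i, j.succ) then 1 else 0) + (if σh (i.castSucc, j) then 1 else 0)

/-- Boundary data on the `w × h` rectangle: line indicators on the top row of vertical bonds,
the bottom row of vertical bonds, and the left and right boundary horizontal bonds. -/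
structure RectBC (w h : ℕ) where
  top : Fin w → Bool
  bottom : Fin w → Bool
  left : Fin h → Bool
  right : Fin h → Bool

/-- An ice configuration has boundary data `β`. -/
def HasBC (w h : ℕ) (σv : Fin w × Fin (h + 1) → Bool) (σh : Fin (w + 1) × Fin h → Bool)
    (β : RectBC w h) : Prop :=
  (∀ i, σv (i, 0) = β.top i) ∧ (∀ i, σv (i, Fin.last h) = β.bottom i) ∧
    (∀ j, σh (0, j) = β.left j) ∧ (∀ j, σh (Fin.last w, j) = β.right j)

open Classical in
/-- Fixed-boundary partition function of the six-vertex model on the `w × h` rectangle: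
the sum over all ice configurations with boundary data `β` of the product of the weights of
all `w·h` vertices. -/
noncomputable def ZRect (w h : ℕ) (a b c : ℝ) (β : RectBC w h) : ℝ :=
  ∑ σ : (Fin w × Fin (h + 1) → Bool) × (Fin (w + 1) × Fin h → Bool),
    if IceRect w h σ.1 σ.2 ∧ HasBC w h σ.1 σ.2 β then
      ∏ i : Fin w, ∏ j : Fin h,
        vweight a b c (σ.1 (i, j.castSucc)) (σ.1 (i, j.succ))
          (σ.2 (i.succ, j)) (σ.2 (i.castSucc, j))
    else 0

/-- Conservation of the horizontal flux across a column whose top and bottom bonds agree. -/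
theorem sum_horizontal_succ {w h : ℕ} {σv : Fin w × Fin (h + 1) → Bool}
    {σh : Fin (w + 1) × Fin h → Bool} (hice : IceRect w h σv σh) (i : Fin w)
    (hv : σv (i, 0) = σv (i, Fin.last h)) :
    ∑ j : Fin h, (if σh (i.succ, j) then 1 else 0 : ℕ) =
      ∑ j : Fin h, (if σh (i.castSucc, j) then 1 else 0 : ℕ) := by
  have hsum := Finset.sum_congr rfl fun (j : Fin h) (_ : j ∈ Finset.univ) => hice i j
  rw [Finset.sum_add_distrib, Finset.sum_add_distrib] at hsum
  -- Both ways of splitting off an end bond from the sum over all `h + 1` vertical bonds.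
  have hfirst := Fin.sum_univ_succ fun j : Fin (h + 1) => (if σv (i, j) then 1 else 0 : ℕ)
  have hlast := Fin.sum_univ_castSucc fun j : Fin (h + 1) => (if σv (i, j) then 1 else 0 : ℕ)
  rw [hv] at hfirst
  lia

theorem horizontal_eq_false {w h : ℕ} {σv : Fin w × Fin (h + 1) → Bool}
    {σh : Fin (w + 1) × Fin h → Bool} (hice : IceRect w h σv σh)
    (hv : ∀ i, σv (i, 0) = σv (i, Fin.last h)) (hl : ∀ j, σh (0, j) = false)
    (i : Fin (w + 1)) : ∀ j, σh (i, j) = false := by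
  induction i using Fin.induction with
  | zero => exact hl
  | succ i ih =>
    have hsum := sum_horizontal_succ hice i (hv i)
    simpa [ih, Finset.sum_eq_zero_iff] using hsum

theorem vertical_eq_top {w h : ℕ} {σv : Fin w × Fin (h + 1) → Bool}
    {σh : Fin (w + 1) × Fin h → Bool} (hice : IceRect w h σv σh)
    (hh : ∀ i j, σh (i, j) = false) (i : Fin w) (j : Fin (h + 1)) :
    σv (i, j) = σv (i, 0) := by
  induction j using Fin.induction with
  | zero => rfl
  | succ j ih =>
    have hij := hice i j
    rw [← ih]
    cases h₁ : σv (i, j.castSucc) <;> cases h₂ : σv (i, j.succ) <;> simp_all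

/-- Frozen case `ρ₂ = 0` (Lemma 5): with no lines on the left and right boundary horizontal
bonds and top and bottom rows both equal to the indicator of an `m`-element set `S ⊆ Fin w`,
there is exactly one ice configuration — every line runs straight down its column and no
horizontal bond carries a line — and the fixed-boundary partition function equals
`a^((w−m)·h) · b^(m·h)`. -/
theorem frozen_boundary_unique_config (w h : ℕ) (hw : 1 ≤ w) (hh : 1 ≤ h)
    (a b c : ℝ) (ha : 0 < a) (hb : 0 < b) (hc : 0 < c)
    (S : Finset (Fin w)) (m : ℕ) (hS : S.card = m) :
    (IceRect w h (fun p => decide (p.1 ∈ S)) (fun _ => false) ∧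
      HasBC w h (fun p => decide (p.1 ∈ S)) (fun _ => false)
        ⟨fun i => decide (i ∈ S), fun i => decide (i ∈ S), fun _ => false, fun _ => false⟩) ∧
    (∀ (σv : Fin w × Fin (h + 1) → Bool) (σh : Fin (w + 1) × Fin h → Bool),
      IceRect w h σv σh →
      HasBC w h σv σh
        ⟨fun i => decide (i ∈ S), fun i => decide (i ∈ S), fun _ => false, fun _ => false⟩ →
      σv = (fun p => decide (p.1 ∈ S)) ∧ σh = (fun _ => false)) ∧
    ZRect w h a b c
        ⟨fun i => decide (i ∈ S), fun i => decide (i ∈ S), fun _ => false, fun _ => false⟩ =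
      a ^ ((w - m) * h) * b ^ (m * h) := by
  have hex : IceRect w h (fun p => decide (p.1 ∈ S)) (fun _ => false) ∧
      HasBC w h (fun p => decide (p.1 ∈ S)) (fun _ => false)
        ⟨fun i => decide (i ∈ S), fun i => decide (i ∈ S), fun _ => false, fun _ => false⟩ :=
    ⟨fun _ _ => rfl, fun _ => rfl, fun _ => rfl, fun _ => rfl, fun _ => rfl⟩
  have huniq : ∀ (σv : Fin w × Fin (h + 1) → Bool) (σh : Fin (w + 1) × Fin h → Bool),
      IceRect w h σv σh →
      HasBC w h σv σh
        ⟨fun i => decide (i ∈ S), fun i => decide (i ∈ S), fun _ => false, fun _ => false⟩ →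
      σv = (fun p => decide (p.1 ∈ S)) ∧ σh = (fun _ => false) := by
    rintro σv σh hice ⟨ht, hbot, hl, -⟩
    have hσh := horizontal_eq_false hice (fun i => (ht i).trans (hbot i).symm) hl
    exact ⟨funext fun p => (vertical_eq_top hice hσh p.1 p.2).trans (ht p.1),
      funext fun p => hσh p.1 p.2⟩
  refine ⟨hex, huniq, ?_⟩
  unfold ZRect
  rw [Finset.sum_eq_single (fun p => decide (p.1 ∈ S), fun _ => false)]
  · rw [if_pos hex]
    have hweight : ∀ i : Fin w, (∏ _j : Fin h,
        vweight a b c (decide (i ∈ S)) (decide (i ∈ S)) false false) =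
          if i ∈ S then b ^ h else a ^ h := by
      intro i
      by_cases hi : i ∈ S <;> simp [vweight, hi]
    simp only [hweight]
    rw [Finset.prod_ite, Finset.prod_const, Finset.prod_const, Finset.filter_not,
      Finset.filter_mem_eq_inter, Finset.univ_inter, Finset.card_sdiff_of_subset S.subset_univ,
      Finset.card_univ, Fintype.card_fin, hS, ← pow_mul, ← pow_mul, mul_comm h, mul_comm h,
      mul_comm]
  · intro σ _ hne
    refine if_neg fun hσ => hne ?_
    exact Prod.ext (huniq σ.1 σ.2 hσ.1 hσ.2).1 (huniq σ.1 σ.2 hσ.1 hσ.2).2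
  · exact fun hmem => absurd (Finset.mem_univ _) hmem
end

section
/- The function g : ℝ → ℝ defined by g(x) = sinh(πx/2)² / (2x · sinh(πx) · cosh(πx/2)) for x ≠ 0 (and g(0) = π/8) is integrable on ℝ, and ∫_{−∞}^{∞} g(x) dx = (2/π) · Σ_{n=0}^{∞} (−1)^n / (2n+1)², i.e. the integral equals 2G/π where G is Catalan's constant. -/
/-!
With `v = πx/2` the integrand equals `sinh v / (4 x cosh² v)`. Writing
`sinh v / v = ∫₀¹ cosh (s v) ds` turns it into `½ ∫₀¹ lsKernel s x ds`, where
`lsKernel s x = (π/4) cosh (s v) / cosh² v`. The kernel is dominated by `1 / cosh v`, so Fubini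
applies and gives both integrability and the value of the integral as `½ ∫₀¹ (∫ lsKernel s x dx) ds`.

The inner integral is a Beta integral: the substitution `y = sigmoid (πx)` gives
`∫ (π/4) exp (rπx) / cosh² (πx/2) dx = ∫₀¹ yʳ (1 - y)⁻ʳ dy = Γ(1 + r) Γ(1 - r) = πr / sin (πr)`,
here with `r = ± s/2`. The outer integral becomes, after `s = (4/π) arctan w`,
`(4/π) ∫₀¹ arctan w / w dw`, and integrating the arctangent series term by term produces
Catalan's constant.
-/

open Real MeasureTheory

/-- The integrand of the Lieb–Sutherland free energy at the free-fermion point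
`a = b = 1`, `c = √2`, extended by its limiting value `π/8` at `x = 0`. -/
noncomputable def liebSutherlandIntegrand (x : ℝ) : ℝ :=
  if x = 0 then π / 8 else
    Real.sinh (π * x / 2) ^ 2 / (2 * x * Real.sinh (π * x) * Real.cosh (π * x / 2))

/-- The kernel whose average over `s ∈ (0, 1)` is twice the Lieb–Sutherland integrand. -/
noncomputable def lsKernel (s x : ℝ) : ℝ :=
  π / 4 * (Real.cosh (s * (π * x / 2)) / Real.cosh (π * x / 2) ^ 2)

/-! ### The kernel: representation of the integrand and domination -/

lemma one_add_sq_div_two_le_cosh (x : ℝ) : 1 + x ^ 2 / 2 ≤ Real.cosh x := by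
  have h1 : Real.cosh x = 2 * Real.sinh (x / 2) ^ 2 + 1 := by
    have h := Real.cosh_two_mul (x / 2)
    rw [mul_div_cancel₀ x two_ne_zero, Real.cosh_sq] at h
    linarith
  have h2 : (x / 2) ^ 2 ≤ Real.sinh (x / 2) ^ 2 := by
    apply sq_le_sq.mpr
    rw [Real.abs_sinh]
    exact Real.self_le_sinh_iff.mpr (abs_nonneg _)
  rw [h1]
  nlinarith

lemma integrable_inv_cosh : Integrable (fun x : ℝ => (Real.cosh x)⁻¹) := by
  refine (integrable_inv_one_add_sq.const_mul 2).mono'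
    (Real.continuous_cosh.inv₀ fun x => (Real.cosh_pos x).ne').aestronglyMeasurable ?_
  refine Filter.Eventually.of_forall fun x => ?_
  have hx := one_add_sq_div_two_le_cosh x
  have h0 : 0 < Real.cosh x := Real.cosh_pos x
  rw [Real.norm_of_nonneg (by positivity), ← div_eq_mul_inv, inv_eq_one_div,
    div_le_div_iff₀ h0 (by positivity)]
  nlinarith [sq_nonneg x]

lemma integrable_inv_cosh_pi : Integrable (fun x : ℝ => π / 4 * (Real.cosh (π * x / 2))⁻¹) := by
  have h := (integrable_inv_cosh.comp_mul_left' (R := π / 2) (by positivity)).const_mul (π / 4)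
  refine h.congr (Filter.Eventually.of_forall fun x => ?_)
  simp only
  congr 3
  ring

lemma continuous_lsKernel : Continuous (Function.uncurry lsKernel) := by
  unfold Function.uncurry lsKernel
  refine continuous_const.mul (Continuous.div ?_ ?_ fun p => ?_)
  · exact Real.continuous_cosh.comp (by fun_prop)
  · exact (Real.continuous_cosh.comp (by fun_prop)).pow 2
  · exact pow_ne_zero 2 (Real.cosh_pos _).ne'

lemma norm_lsKernel_le {s : ℝ} (hs : s ∈ Set.Ioo (0 : ℝ) 1) (x : ℝ) :
    ‖lsKernel s x‖ ≤ π / 4 * (Real.cosh (π * x / 2))⁻¹ := by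
  have hc := Real.cosh_pos (π * x / 2)
  have hc' := Real.cosh_pos (s * (π * x / 2))
  unfold lsKernel
  rw [Real.norm_of_nonneg (by positivity)]
  have h : Real.cosh (s * (π * x / 2)) ≤ Real.cosh (π * x / 2) := by
    rw [Real.cosh_le_cosh, abs_mul, abs_of_pos hs.1]
    exact mul_le_of_le_one_left (abs_nonneg _) hs.2.le
  refine mul_le_mul_of_nonneg_left ?_ (by positivity)
  rw [inv_eq_one_div, div_le_div_iff₀ (by positivity) hc]
  nlinarith

lemma integrable_lsKernel_prod :
    Integrable (Function.uncurry lsKernel)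
      ((volume.restrict (Set.Ioo (0 : ℝ) 1)).prod volume) := by
  refine (integrable_inv_cosh_pi.comp_snd (volume.restrict (Set.Ioo (0 : ℝ) 1))).mono'
    continuous_lsKernel.aestronglyMeasurable ?_
  have h : ∀ᵐ s ∂(volume.restrict (Set.Ioo (0 : ℝ) 1)), s ∈ Set.Ioo (0 : ℝ) 1 :=
    ae_restrict_mem measurableSet_Ioo
  filter_upwards [Measure.quasiMeasurePreserving_fst.ae h] with p hp
  exact norm_lsKernel_le hp p.2

lemma integrable_lsKernel {s : ℝ} (hs : s ∈ Set.Ioo (0 : ℝ) 1) : Integrable (lsKernel s) := by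
  refine integrable_inv_cosh_pi.mono' ?_ (Filter.Eventually.of_forall (norm_lsKernel_le hs))
  exact (continuous_lsKernel.comp (by fun_prop : Continuous fun x : ℝ => (s, x))).aestronglyMeasurable

/-- The integrand as an average of kernels, from `sinh v / v = ∫₀¹ cosh (s v) ds`. It includes
`x = 0`, where it matches the prescribed value `π/8`. -/
lemma liebSutherlandIntegrand_eq (x : ℝ) :
    liebSutherlandIntegrand x = 1 / 2 * ∫ s in Set.Ioo (0 : ℝ) 1, lsKernel s x := by
  rw [← integral_Ioc_eq_integral_Ioo, ← intervalIntegral.integral_of_le zero_le_one]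
  unfold liebSutherlandIntegrand lsKernel
  split_ifs with hx
  · subst hx
    simp
    ring
  · have hv : π * x / 2 ≠ 0 := by positivity
    have hc := (Real.cosh_pos (π * x / 2)).ne'
    have hs : Real.sinh (π * x / 2) ≠ 0 := by simpa using hv
    have h2 : Real.sinh (π * x) = 2 * Real.sinh (π * x / 2) * Real.cosh (π * x / 2) := by
      rw [← Real.sinh_two_mul]
      congr 1
      ring
    have hcosh : ∀ a b : ℝ, ∫ u in a..b, Real.cosh u = Real.sinh b - Real.sinh a := fun a b =>
      intervalIntegral.integral_eq_sub_of_hasDerivAt (fun u _ => Real.hasDerivAt_sinh u)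
        (Real.continuous_cosh.intervalIntegrable a b)
    rw [intervalIntegral.integral_const_mul, intervalIntegral.integral_div,
      intervalIntegral.integral_comp_mul_right (fun u => Real.cosh u) hv, hcosh, h2]
    simp only [one_mul, zero_mul, Real.sinh_zero, sub_zero, smul_eq_mul]
    field_simp
    norm_num

/-! ### The inner integral: a Beta integral -/

/-- The Beta integral `B(1 + r, 1 - r)` evaluated by Euler's reflection formula. The value `r = 0`
is excluded only because the right-hand side degenerates to `0 / 0` there. -/
lemma integral_rpow_mul_one_sub_rpow {r : ℝ} (hr0 : r ≠ 0) (hr : |r| < 1) :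
    ∫ y in Set.Ioo (0 : ℝ) 1, y ^ r * (1 - y) ^ (-r) = π * r / Real.sin (π * r) := by
  obtain ⟨h1, h2⟩ := abs_lt.mp hr
  have hb := Complex.betaIntegral_eq_Gamma_mul_div ((1 + r : ℝ) : ℂ) ((1 - r : ℝ) : ℂ)
    (by simp; linarith) (by simp; linarith)
  have hint : Complex.betaIntegral ((1 + r : ℝ) : ℂ) ((1 - r : ℝ) : ℂ) =
      ((∫ y in Set.Ioo (0 : ℝ) 1, y ^ r * (1 - y) ^ (-r) : ℝ) : ℂ) := by
    rw [Complex.betaIntegral, intervalIntegral.integral_of_le zero_le_one,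
      integral_Ioc_eq_integral_Ioo, ← integral_complex_ofReal]
    refine setIntegral_congr_fun measurableSet_Ioo fun y hy => ?_
    rw [Complex.ofReal_mul, Complex.ofReal_cpow hy.1.le, Complex.ofReal_cpow (by linarith [hy.2])]
    push_cast
    congr 2 <;> ring
  have hsum : ((1 + r : ℝ) : ℂ) + ((1 - r : ℝ) : ℂ) = ((2 : ℝ) : ℂ) := by
    push_cast
    ring
  rw [hint, hsum, Complex.Gamma_ofReal, Complex.Gamma_ofReal, Complex.Gamma_ofReal] at hb
  have hb' : ∫ y in Set.Ioo (0 : ℝ) 1, y ^ r * (1 - y) ^ (-r) =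
      Real.Gamma (1 + r) * Real.Gamma (1 - r) / Real.Gamma 2 := by
    exact_mod_cast hb
  rw [hb', Real.Gamma_two, div_one, add_comm, Real.Gamma_add_one hr0, mul_assoc,
    Real.Gamma_mul_Gamma_one_sub]
  ring

lemma sigmoid_mul_one_sub_sigmoid (y : ℝ) :
    Real.sigmoid y * (1 - Real.sigmoid y) = 1 / (4 * Real.cosh (y / 2) ^ 2) := by
  have hc : 4 * Real.cosh (y / 2) ^ 2 = (1 + Real.exp (-y)) * (1 + Real.exp y) := by
    have h1 : Real.exp (y / 2) ^ 2 = Real.exp y := by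
      rw [← Real.exp_nat_mul]
      congr 1
      push_cast
      ring
    have h2 : Real.exp (-(y / 2)) ^ 2 = Real.exp (-y) := by
      rw [← Real.exp_nat_mul]
      congr 1
      push_cast
      ring
    have h3 : Real.exp (y / 2) * Real.exp (-(y / 2)) = 1 := by
      rw [← Real.exp_add]
      simp
    have h4 : Real.exp y * Real.exp (-y) = 1 := by
      rw [← Real.exp_add]
      simp
    rw [Real.cosh_eq]
    linear_combination h1 + h2 + 2 * h3 - h4
  rw [← Real.sigmoid_neg, Real.sigmoid_def, Real.sigmoid_def, neg_neg, ← mul_inv, hc, one_div]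

/-- Substitution `y = sigmoid (πx)` in the Beta integral. -/
lemma integral_exp_div_cosh_sq {r : ℝ} (hr0 : r ≠ 0) (hr : |r| < 1) :
    ∫ x : ℝ, π / 4 * (Real.exp (r * (π * x)) / Real.cosh (π * x / 2) ^ 2) =
      π * r / Real.sin (π * r) := by
  have hder : ∀ x ∈ (Set.univ : Set ℝ), HasDerivWithinAt (fun x : ℝ => Real.sigmoid (π * x))
      (Real.sigmoid (π * x) * (1 - Real.sigmoid (π * x)) * π) Set.univ x := fun x _ => by
    have h := (Real.hasDerivAt_sigmoid (π * x)).comp x ((hasDerivAt_id x).const_mul π)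
    simpa [Function.comp_def] using h.hasDerivWithinAt (s := Set.univ)
  have hinj : Set.InjOn (fun x : ℝ => Real.sigmoid (π * x)) Set.univ := fun a _ b _ h =>
    mul_left_cancel₀ Real.pi_ne_zero (Real.sigmoid_injective h)
  have himg : (fun x : ℝ => Real.sigmoid (π * x)) '' Set.univ = Set.Ioo 0 1 := by
    rw [Set.image_univ, ← Real.range_sigmoid]
    exact (mul_left_surjective₀ Real.pi_ne_zero).range_comp Real.sigmoid
  have h := integral_image_eq_integral_abs_deriv_smul MeasurableSet.univ hder hinj
    (fun y : ℝ => y ^ r * (1 - y) ^ (-r))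
  rw [himg, integral_rpow_mul_one_sub_rpow hr0 hr, setIntegral_univ] at h
  rw [h]
  refine integral_congr_ae (Filter.Eventually.of_forall fun x => ?_)
  have hp := Real.sigmoid_pos (π * x)
  have hq : 0 < 1 - Real.sigmoid (π * x) := by linarith [Real.sigmoid_lt_one (π * x)]
  have hc := Real.cosh_pos (π * x / 2)
  -- `y / (1 - y) = exp (πx)` for `y = sigmoid (πx)`
  have hratio : Real.sigmoid (π * x) = Real.exp (π * x) * (1 - Real.sigmoid (π * x)) := by
    have h3 := Real.sigmoid_mul_rexp_neg (-(π * x))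
    rw [neg_neg, Real.sigmoid_neg] at h3
    rw [mul_comm (Real.exp (π * x)), h3]
  have hpow : Real.sigmoid (π * x) ^ r * (1 - Real.sigmoid (π * x)) ^ (-r) =
      Real.exp (r * (π * x)) := by
    rw [Real.rpow_neg hq.le, ← div_eq_mul_inv, ← Real.div_rpow hp.le hq.le,
      (div_eq_iff hq.ne').mpr hratio, ← Real.exp_mul, mul_comm]
  simp only [smul_eq_mul]
  rw [hpow, sigmoid_mul_one_sub_sigmoid, abs_of_pos (by positivity)]
  field_simp

lemma integral_lsKernel {s : ℝ} (hs : s ∈ Set.Ioo (0 : ℝ) 1) :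
    ∫ x : ℝ, lsKernel s x = π * (s / 2) / Real.sin (π * (s / 2)) := by
  have hpos : 0 < s := hs.1
  have hlt : s < 1 := hs.2
  have habs : |s / 2| < 1 := by
    rw [abs_of_pos (by positivity)]
    linarith
  -- both exponentials making up `cosh` are dominated by twice the kernel
  have hint : ∀ r : ℝ, (r = s / 2 ∨ r = -(s / 2)) →
      Integrable fun x : ℝ => π / 4 * (Real.exp (r * (π * x)) / Real.cosh (π * x / 2) ^ 2) := by
    intro r hr
    have hcont : Continuous fun x : ℝ =>
        π / 4 * (Real.exp (r * (π * x)) / Real.cosh (π * x / 2) ^ 2) := by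
      refine continuous_const.mul (Continuous.div (by fun_prop) ?_ fun x => ?_)
      · exact (Real.continuous_cosh.comp (by fun_prop)).pow 2
      · exact pow_ne_zero 2 (Real.cosh_pos _).ne'
    refine ((integrable_lsKernel hs).const_mul 2).mono' hcont.aestronglyMeasurable
      (Filter.Eventually.of_forall fun x => ?_)
    have hc := Real.cosh_pos (π * x / 2)
    rw [Real.norm_of_nonneg (by positivity)]
    unfold lsKernel
    have hle : Real.exp (r * (π * x)) ≤ 2 * Real.cosh (s * (π * x / 2)) := by
      rw [Real.cosh_eq]
      have ha := Real.exp_pos (s * (π * x / 2))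
      have hb := Real.exp_pos (-(s * (π * x / 2)))
      rcases hr with rfl | rfl
      · rw [show s / 2 * (π * x) = s * (π * x / 2) by ring]
        linarith
      · rw [show -(s / 2) * (π * x) = -(s * (π * x / 2)) by ring]
        linarith
    calc π / 4 * (Real.exp (r * (π * x)) / Real.cosh (π * x / 2) ^ 2)
        ≤ π / 4 * (2 * Real.cosh (s * (π * x / 2)) / Real.cosh (π * x / 2) ^ 2) := by gcongr
      _ = 2 * (π / 4 * (Real.cosh (s * (π * x / 2)) / Real.cosh (π * x / 2) ^ 2)) := by ring
  have hsplit : ∀ x : ℝ, lsKernel s x =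
      1 / 2 * (π / 4 * (Real.exp (s / 2 * (π * x)) / Real.cosh (π * x / 2) ^ 2) +
        π / 4 * (Real.exp (-(s / 2) * (π * x)) / Real.cosh (π * x / 2) ^ 2)) := fun x => by
    unfold lsKernel
    rw [Real.cosh_eq (s * (π * x / 2)), show s / 2 * (π * x) = s * (π * x / 2) by ring,
      show -(s / 2) * (π * x) = -(s * (π * x / 2)) by ring]
    ring
  simp_rw [hsplit]
  rw [integral_const_mul, integral_add (hint _ (Or.inl rfl)) (hint _ (Or.inr rfl)),
    integral_exp_div_cosh_sq (by positivity) habs,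
    integral_exp_div_cosh_sq (neg_ne_zero.mpr (by positivity)) (by rwa [abs_neg]),
    mul_neg, Real.sin_neg, neg_div_neg_eq]
  ring

/-! ### The outer integral: Catalan's constant -/

/-- Term-by-term integration of the arctangent series. -/
lemma integral_arctan_div :
    ∫ w in Set.Ioo (0 : ℝ) 1, Real.arctan w / w =
      ∑' n : ℕ, (-1 : ℝ) ^ n / (2 * (n : ℝ) + 1) ^ 2 := by
  have hpow : ∀ n : ℕ, ∫ w in Set.Ioo (0 : ℝ) 1, w ^ (2 * n) = 1 / (2 * (n : ℝ) + 1) := fun n => by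
    rw [← integral_Ioc_eq_integral_Ioo, ← intervalIntegral.integral_of_le zero_le_one,
      integral_pow]
    simp
  have hint : ∀ n : ℕ, Integrable (fun w : ℝ => (-1 : ℝ) ^ n / (2 * (n : ℝ) + 1) * w ^ (2 * n))
      (volume.restrict (Set.Ioo (0 : ℝ) 1)) := fun n =>
    ((by fun_prop : Continuous fun w : ℝ =>
      (-1 : ℝ) ^ n / (2 * (n : ℝ) + 1) * w ^ (2 * n)).integrableOn_Icc (a := 0) (b := 1)).mono_set
        Set.Ioo_subset_Icc_self
  have hnorm : ∀ n : ℕ, ∫ w in Set.Ioo (0 : ℝ) 1,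
      ‖(-1 : ℝ) ^ n / (2 * (n : ℝ) + 1) * w ^ (2 * n)‖ = 1 / (2 * (n : ℝ) + 1) ^ 2 := fun n => by
    have h : ∀ w : ℝ, ‖(-1 : ℝ) ^ n / (2 * (n : ℝ) + 1) * w ^ (2 * n)‖ =
        1 / (2 * (n : ℝ) + 1) * w ^ (2 * n) := fun w => by
      have hw : 0 ≤ w ^ (2 * n) := by
        rw [pow_mul]
        positivity
      rw [norm_mul, norm_div, norm_pow, norm_neg, norm_one, one_pow, Real.norm_of_nonneg hw,
        Real.norm_of_nonneg (by positivity)]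
    simp_rw [h]
    rw [integral_const_mul, hpow]
    field_simp
  have hsum : Summable fun n : ℕ => ∫ w in Set.Ioo (0 : ℝ) 1,
      ‖(-1 : ℝ) ^ n / (2 * (n : ℝ) + 1) * w ^ (2 * n)‖ := by
    simp_rw [hnorm]
    have h := (summable_nat_add_iff 1).mpr (Real.summable_one_div_nat_pow.mpr one_lt_two)
    refine h.of_nonneg_of_le (fun n => by positivity) fun n => ?_
    have hn : (0 : ℝ) ≤ n := n.cast_nonneg
    push_cast
    gcongr
    linarith
  have h := integral_tsum_of_summable_integral_norm hint hsum
  have hterm : ∀ n : ℕ, ∫ w in Set.Ioo (0 : ℝ) 1, (-1 : ℝ) ^ n / (2 * (n : ℝ) + 1) * w ^ (2 * n) =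
      (-1 : ℝ) ^ n / (2 * (n : ℝ) + 1) ^ 2 := fun n => by
    rw [integral_const_mul, hpow]
    field_simp
  simp_rw [hterm] at h
  rw [h]
  refine setIntegral_congr_fun measurableSet_Ioo fun w hw => ?_
  have hw0 : w ≠ 0 := hw.1.ne'
  have ha := (Real.hasSum_arctan (x := w)
    (by rw [Real.norm_of_nonneg hw.1.le]; exact hw.2)).div_const w
  rw [← ha.tsum_eq]
  refine tsum_congr fun n => ?_
  push_cast
  field_simp
  ring

/-- Substitution `s = (4/π) arctan w`, that is, the half-angle substitution in
`∫ t / sin t dt` over `(0, π/2)`. -/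
lemma integral_div_sin :
    ∫ s in Set.Ioo (0 : ℝ) 1, π * (s / 2) / Real.sin (π * (s / 2)) =
      4 / π * ∑' n : ℕ, (-1 : ℝ) ^ n / (2 * (n : ℝ) + 1) ^ 2 := by
  have hpi := Real.pi_pos
  have hder : ∀ w ∈ Set.Ioo (0 : ℝ) 1, HasDerivWithinAt (fun w : ℝ => 4 / π * Real.arctan w)
      (4 / π * (1 / (1 + w ^ 2))) (Set.Ioo 0 1) w := fun w _ =>
    ((Real.hasDerivAt_arctan w).const_mul (4 / π)).hasDerivWithinAt
  have hinj : Set.InjOn (fun w : ℝ => 4 / π * Real.arctan w) (Set.Ioo 0 1) := fun a _ b _ h =>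
    Real.arctan_injective (mul_left_cancel₀ (by positivity) h)
  have himg : (fun w : ℝ => 4 / π * Real.arctan w) '' Set.Ioo 0 1 = Set.Ioo 0 1 := by
    ext s
    constructor
    · rintro ⟨w, ⟨h0, h1⟩, rfl⟩
      have ha : 0 < Real.arctan w := Real.arctan_pos.mpr h0
      have hb : Real.arctan w < π / 4 := by
        rw [← Real.arctan_one]
        exact Real.arctan_strictMono h1
      refine ⟨by positivity, ?_⟩
      simp only
      rw [div_mul_eq_mul_div, div_lt_one hpi]
      linarith
    · rintro ⟨h0, h1⟩
      have hlo : 0 < π / 4 * s := by positivity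
      have hhi : π / 4 * s < π / 4 := by nlinarith
      have hat : Real.arctan (Real.tan (π / 4 * s)) = π / 4 * s :=
        Real.arctan_tan (by linarith) (by linarith)
      refine ⟨Real.tan (π / 4 * s), ⟨?_, ?_⟩, ?_⟩
      · exact Real.tan_pos_of_pos_of_lt_pi_div_two hlo (by linarith)
      · rw [← Real.arctan_strictMono.lt_iff_lt, hat, Real.arctan_one]
        exact hhi
      · simp only
        rw [hat]
        field_simp
  have h := integral_image_eq_integral_abs_deriv_smul measurableSet_Ioo hder hinj
    (fun s : ℝ => π * (s / 2) / Real.sin (π * (s / 2)))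
  rw [himg] at h
  rw [h, ← integral_arctan_div, ← integral_const_mul]
  refine setIntegral_congr_fun measurableSet_Ioo fun w hw => ?_
  have hw0 : w ≠ 0 := hw.1.ne'
  have hang : π * (4 / π * Real.arctan w / 2) = 2 * Real.arctan w := by
    field_simp
    ring
  have hsin : Real.sin (2 * Real.arctan w) = 2 * w / (1 + w ^ 2) := by
    have hsq : √(1 + w ^ 2) * √(1 + w ^ 2) = 1 + w ^ 2 := Real.mul_self_sqrt (by positivity)
    rw [Real.sin_two_mul, Real.sin_arctan, Real.cos_arctan, mul_assoc, div_mul_div_comm, mul_one,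
      hsq, mul_div_assoc]
  simp only [smul_eq_mul]
  rw [hang, hsin, abs_of_pos (by positivity)]
  field_simp

/-- The Lieb–Sutherland integrand at the free-fermion point is integrable on `ℝ` and its
integral equals `2G/π`, where `G = Σ_{n≥0} (−1)ⁿ/(2n+1)²` is Catalan's constant. -/
theorem liebSutherland_integral_eq_catalan :
    Integrable liebSutherlandIntegrand ∧
      ∫ x : ℝ, liebSutherlandIntegrand x =
        (2 / π) * ∑' n : ℕ, (-1 : ℝ) ^ n / (2 * (n : ℝ) + 1) ^ 2 := by
  rw [show liebSutherlandIntegrand =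
    fun x => 1 / 2 * ∫ s in Set.Ioo (0 : ℝ) 1, lsKernel s x from
      funext liebSutherlandIntegrand_eq]
  refine ⟨integrable_lsKernel_prod.integral_prod_right.const_mul _, ?_⟩
  rw [integral_const_mul, ← integral_integral_swap integrable_lsKernel_prod,
    setIntegral_congr_fun measurableSet_Ioo (fun s hs => integral_lsKernel hs), integral_div_sin]
  ring
end
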